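/- arXiv:2201.01844 — 3 statements merged into one kernel-verified Lean document; each statement's English description precedes it below -/
import Mathlib

section
/- Let S be a finite set of ν objects, let ξ ≥ ν be an integer, and let χ : S → {1,…,ξ} be a uniformly random coloring. Then for any integer t with 1 ≤ t ≤ ν, the probability that the number of distinct colors used satisfies |χ(S)| ≤ t is at most e^t · (t/ξ)^{ν−t}. -/
/-!
A coloring with at most `t ≤ ξ` colors takes its values in one of the `ξ.choose t` sets of exactly
`t` colors, and each such set supports `t ^ ν` colorings. Since `ξ.choose t ≤ ξ ^ t / t!` and
`t ^ t / t! ≤ e ^ t`, the union bound gives at most `e ^ t * ξ ^ t * t ^ (ν - t)` colorings.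
For `t > ξ` the claimed bound exceeds the number `ξ ^ ν` of all colorings.
-/

section Counting

variable {S C : Type*} [Fintype C] {t : ℕ}

theorem exists_mem_powersetCard_forall_mem_of_ncard_range_le (ht : t ≤ Fintype.card C) {χ : S → C}
    (hχ : (Set.range χ).ncard ≤ t) :
    ∃ T ∈ Finset.univ.powersetCard t, ∀ s, χ s ∈ T := by
  classical
  rw [Set.ncard_eq_toFinset_card'] at hχ
  obtain ⟨T, range_subset, -, card_T⟩ :=
    Finset.exists_subsuperset_card_eq (Finset.subset_univ _) hχ ht
  exact ⟨T, Finset.mem_powersetCard_univ.mpr card_T, fun s => range_subset (by simp)⟩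

variable [Fintype S]

theorem ncard_setOf_ncard_range_le_le_choose_mul_pow (ht : t ≤ Fintype.card C) :
    {χ : S → C | (Set.range χ).ncard ≤ t}.ncard ≤
      (Fintype.card C).choose t * t ^ Fintype.card S := by
  classical
  let colorings (T : Finset C) : Finset (S → C) := Fintype.piFinset fun _ => T
  have covering : {χ : S → C | (Set.range χ).ncard ≤ t} ⊆
      ((Finset.univ.powersetCard t).biUnion colorings : Finset (S → C)) := fun χ hχ => by
    simpa only [colorings, Finset.mem_coe, Finset.mem_biUnion, Fintype.mem_piFinset] using
      exists_mem_powersetCard_forall_mem_of_ncard_range_le ht hχ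
  have card_colorings : ∀ T ∈ Finset.univ.powersetCard t,
      (colorings T).card ≤ t ^ Fintype.card S := fun T hT => by
    simp [colorings, Fintype.card_piFinset, Finset.mem_powersetCard_univ.mp hT]
  calc {χ : S → C | (Set.range χ).ncard ≤ t}.ncard
      ≤ ((Finset.univ.powersetCard t).biUnion colorings).card := by
        rw [← Set.ncard_coe_finset]
        exact Set.ncard_le_ncard covering
    _ ≤ (Finset.univ.powersetCard t).card * t ^ Fintype.card S :=
        Finset.card_biUnion_le_card_mul _ _ _ card_colorings
    _ = (Fintype.card C).choose t * t ^ Fintype.card S := by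
        rw [Finset.card_powersetCard, Finset.card_univ]

end Counting

theorem choose_mul_pow_self_le_exp_mul_pow (n t : ℕ) :
    (n.choose t : ℝ) * (t : ℝ) ^ t ≤ Real.exp t * (n : ℝ) ^ t :=
  calc (n.choose t : ℝ) * (t : ℝ) ^ t
      ≤ (n : ℝ) ^ t / t.factorial * (t : ℝ) ^ t := by gcongr; exact Nat.choose_le_pow_div t n
    _ = (t : ℝ) ^ t / t.factorial * (n : ℝ) ^ t := by ring
    _ ≤ Real.exp t * (n : ℝ) ^ t := by
        gcongr
        exact Real.pow_div_factorial_le_exp t t.cast_nonneg t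

theorem choose_mul_pow_le_exp_mul_div_pow_mul_pow {n t m : ℕ} (hn : n ≠ 0) (htm : t ≤ m) :
    (n.choose t : ℝ) * (t : ℝ) ^ m ≤ Real.exp t * ((t : ℝ) / n) ^ (m - t) * (n : ℝ) ^ m := by
  obtain ⟨k, rfl⟩ := Nat.exists_eq_add_of_le htm
  calc (n.choose t : ℝ) * (t : ℝ) ^ (t + k)
      = n.choose t * (t : ℝ) ^ t * (t : ℝ) ^ k := by ring
    _ ≤ Real.exp t * (n : ℝ) ^ t * (t : ℝ) ^ k :=
        mul_le_mul_of_nonneg_right (choose_mul_pow_self_le_exp_mul_pow n t) (by positivity)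
    _ = Real.exp t * ((t : ℝ) / n) ^ (t + k - t) * (n : ℝ) ^ (t + k) := by
        rw [Nat.add_sub_cancel_left, div_pow, pow_add]
        field_simp

theorem prob_few_distinct_colors_general {S C : Type*} [Fintype S] [Fintype C] [Nonempty C] {t : ℕ}
    (ht : t ≤ Fintype.card S) :
    ({χ : S → C | (Set.range χ).ncard ≤ t}.ncard : ℝ) ≤
      Real.exp t * ((t : ℝ) / Fintype.card C) ^ (Fintype.card S - t) *
        (Fintype.card C : ℝ) ^ Fintype.card S := by
  rcases le_total t (Fintype.card C) with few | many
  · calc ({χ : S → C | (Set.range χ).ncard ≤ t}.ncard : ℝ)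
        ≤ (Fintype.card C).choose t * (t : ℝ) ^ Fintype.card S := by
          exact_mod_cast ncard_setOf_ncard_range_le_le_choose_mul_pow few
      _ ≤ _ := choose_mul_pow_le_exp_mul_div_pow_mul_pow Fintype.card_ne_zero ht
  · have one_le_ratio : 1 ≤ (t : ℝ) / Fintype.card C := by
      rw [one_le_div (by exact_mod_cast Fintype.card_pos)]
      exact_mod_cast many
    have one_le_factor : 1 ≤ Real.exp t * ((t : ℝ) / Fintype.card C) ^ (Fintype.card S - t) :=
      one_le_mul_of_one_le_of_one_le (Real.one_le_exp t.cast_nonneg) (one_le_pow₀ one_le_ratio)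
    calc ({χ : S → C | (Set.range χ).ncard ≤ t}.ncard : ℝ)
        ≤ (Fintype.card C : ℝ) ^ Fintype.card S := by
          classical
          exact_mod_cast (Set.ncard_le_card _).trans_eq (by simp)
      _ ≤ _ := le_mul_of_one_le_left (by positivity) one_le_factor

/-- Let `S` be a finite set of `ν` objects, `ξ ≥ ν` an
integer, and `χ : S → {1,…,ξ}` a uniformly random coloring.  For any integer
`t` with `1 ≤ t ≤ ν`, the probability that the number of distinct colors used
satisfies `|χ(S)| ≤ t` is at most `e^t·(t/ξ)^{ν−t}`.  (Probability is modelled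
by counting: the number of such colorings is at most `e^t·(t/ξ)^{ν−t}·ξ^ν`.) -/
theorem prob_few_distinct_colors (S : Type*) [Fintype S] (ξ t : ℕ)
    (hξ : Fintype.card S ≤ ξ) (ht1 : 1 ≤ t) (ht2 : t ≤ Fintype.card S) :
    (({χ : S → Fin ξ | (Set.range χ).ncard ≤ t}).ncard : ℝ)
      ≤ Real.exp t * ((t : ℝ) / (ξ : ℝ)) ^ (Fintype.card S - t) *
          (ξ : ℝ) ^ (Fintype.card S) := by
  have : Nonempty (Fin ξ) := Fin.pos_iff_nonempty.mp (ht1.trans (ht2.trans hξ))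
  simpa only [Fintype.card_fin] using prob_few_distinct_colors_general (C := Fin ξ) ht2
end

section
/- Let ε ∈ (0,1), let V be a finite set of ν objects with ν ≥ 640/ε², and let ξ be an integer with ν ≤ ξ ≤ 2ν. Let S, T ⊆ V be disjoint sets with |S| ≥ εν/4 and |T| ≥ εν/4. If χ : V → ℤ/ξℤ is a uniformly random coloring, then the probability that there is no pair s ∈ S, t ∈ T with χ(s) − χ(t) ≡ ±1 (mod ξ) is at most exp(−ε²ν/640). -/
/-!
Reveal the colors on the smaller set `S` first. If `S` receives `k` distinct colors, then each
element of `T` independently avoids the `k` forbidden colors with probability `1 - k / ξ`, so the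
conditional probability of having no connected pair is at most `x ^ k` with `x = exp (-|T| / ξ)`.
While `S` is being revealed at most half of the colors have been seen, so each new color is fresh
with probability at least `1 / 2` and multiplies the expectation of `x ^ k` by at most
`(1 + x) / 2 ≤ exp (-|T| / (4 ξ))`. Over all of `S` this gives `exp (-|S| |T| / (4 ξ))`.
-/

open Finset Function
open scoped BigOperators

lemma natCast_ncard_setOf_eq_card_mul_expect {Ω : Type*} [Fintype Ω] (p : Ω → Prop)
    [DecidablePred p] :
    ({ω | p ω}.ncard : ℝ) = Fintype.card Ω * 𝔼 ω, if p ω then (1 : ℝ) else 0 := by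
  rw [Fintype.card_mul_expect, sum_boole, Set.ncard_eq_toFinset_card', Set.toFinset_ofPred]

lemma one_add_exp_neg_div_two_le_exp {u : ℝ} (hu₀ : 0 ≤ u) (hu₁ : u ≤ 1) :
    (1 + Real.exp (-u)) / 2 ≤ Real.exp (-(u / 4)) := by
  have exp_neg_le : Real.exp (-u) ≤ 1 - u / 2 :=
    calc Real.exp (-u) = (Real.exp u)⁻¹ := Real.exp_neg u
      _ ≤ (u + 1)⁻¹ := by gcongr; exact Real.add_one_le_exp u
      _ ≤ 1 - u / 2 := by
        rw [inv_le_iff_one_le_mul₀ (by positivity)]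
        nlinarith
  linarith [Real.one_sub_le_exp_neg (u / 4)]

lemma one_sub_div_pow_le_exp_pow (m : ℕ) {k n : ℕ} (hkn : k ≤ n) :
    (1 - k / n : ℝ) ^ m ≤ Real.exp (-(m / n)) ^ k := by
  have base_nonneg : (0 : ℝ) ≤ 1 - k / n :=
    sub_nonneg.2 (div_le_one_of_le₀ (mod_cast hkn) (by positivity))
  calc (1 - k / n : ℝ) ^ m ≤ Real.exp (-(k / n)) ^ m := by
        gcongr
        exact Real.one_sub_le_exp_neg _
    _ = Real.exp (-(m / n)) ^ k := by
        rw [← Real.exp_nat_mul, ← Real.exp_nat_mul]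
        ring_nf

lemma apply_update_of_dependsOn {ι β : Type*} {α : ι → Type*} [DecidableEq ι]
    {f : (∀ i, α i) → β} {s : Set ι} (hf : DependsOn f s) {i : ι} (hi : i ∉ s)
    (χ : ∀ i, α i) (z : α i) : f (update χ i z) = f χ :=
  hf fun _ hj ↦ update_of_ne (ne_of_mem_of_not_mem hj hi) z χ

lemma dependsOn_finset_image {ι β : Type*} [DecidableEq β] (s : Finset ι) :
    DependsOn (fun χ : ι → β ↦ s.image χ) s :=
  fun _ _ h ↦ image_congr h

section RandomColor

variable {Z : Type*} [Fintype Z] [Nonempty Z] [DecidableEq Z]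

lemma expect_ite_notMem (A : Finset Z) :
    (𝔼 z, if z ∉ A then (1 : ℝ) else 0) = 1 - #A / Fintype.card Z := by
  have card_ne_zero : (Fintype.card Z : ℝ) ≠ 0 := by positivity
  rw [Fintype.expect_eq_sum_div_card, sum_boole, filter_notMem_eq_sdiff, ← compl_eq_univ_sdiff,
    card_compl, Nat.cast_sub (card_le_univ A), sub_div, div_self card_ne_zero]

lemma expect_pow_card_insert (x : ℝ) (A : Finset Z) :
    𝔼 z, x ^ #(insert z A) = x ^ #A * (x + (1 - x) * (#A / Fintype.card Z)) := by
  have pow_card_insert (z : Z) :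
      x ^ #(insert z A) = x ^ #A * (1 - (1 - x) * if z ∉ A then 1 else 0) := by
    by_cases hz : z ∈ A
    · simp [hz]
    · simp [hz, pow_succ]
  simp_rw [pow_card_insert, ← mul_expect, expect_sub_distrib, ← mul_expect, expect_ite_notMem,
    Fintype.expect_one]
  ring

lemma expect_pow_card_insert_le {x : ℝ} (hx₀ : 0 ≤ x) (hx₁ : x ≤ 1) {A : Finset Z}
    (hA : 2 * #A ≤ Fintype.card Z) :
    𝔼 z, x ^ #(insert z A) ≤ x ^ #A * ((1 + x) / 2) := by
  have dens_le_half : (#A : ℝ) / Fintype.card Z ≤ 1 / 2 := by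
    rw [div_le_div_iff₀ (by positivity) two_pos]
    exact_mod_cast (by omega : #A * 2 ≤ 1 * Fintype.card Z)
  rw [expect_pow_card_insert]
  gcongr
  nlinarith

end RandomColor

section RandomColoring

variable {V Z : Type*} [Fintype V] [DecidableEq V] [Fintype Z] [Nonempty Z]

lemma expect_eq_expect_expect_update {M : Type*} [AddCommMonoid M] [Module ℚ≥0 M]
    (v : V) (F : (V → Z) → M) :
    𝔼 χ, F χ = 𝔼 χ, 𝔼 z, F (update χ v z) := by
  let swapColor : (V → Z) × Z → (V → Z) × Z := fun p ↦ (update p.1 v p.2, p.1 v)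
  have swapColor_involutive : Involutive swapColor := fun p ↦ by simp [swapColor]
  calc 𝔼 χ, F χ = 𝔼 χ, 𝔼 _z : Z, F χ := by simp_rw [Fintype.expect_const]
    _ = 𝔼 p : (V → Z) × Z, F p.1 := (expect_product' univ univ fun χ _ ↦ F χ).symm
    _ = 𝔼 p : (V → Z) × Z, F (update p.1 v p.2) :=
      (Fintype.expect_bijective swapColor swapColor_involutive.bijective _ _ fun _ ↦ rfl).symm
    _ = 𝔼 χ, 𝔼 z, F (update χ v z) := expect_product' univ univ fun χ z ↦ F (update χ v z)

lemma expect_prod_apply_eq_expect_pow {K : Type*} [Semifield K] [CharZero K] {T : Finset V}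
    {g : (V → Z) → Z → K} (hg : DependsOn g (T : Set V)ᶜ) :
    𝔼 χ, ∏ t ∈ T, g χ (χ t) = 𝔼 χ, (𝔼 z, g χ z) ^ #T := by
  -- The exponent `n` counts the coordinates that have already been averaged out.
  suffices h : ∀ n, 𝔼 χ, (𝔼 z, g χ z) ^ n * ∏ t ∈ T, g χ (χ t) = 𝔼 χ, (𝔼 z, g χ z) ^ (n + #T) by
    simpa using h 0
  induction T using Finset.induction_on with
  | empty => simp
  | insert a T ha ih =>
    intro n
    have g_update (χ : V → Z) (z : Z) : g (update χ a z) = g χ :=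
      apply_update_of_dependsOn hg (by simp) χ z
    have prod_update (χ : V → Z) (z : Z) :
        ∏ t ∈ T, g χ (update χ a z t) = ∏ t ∈ T, g χ (χ t) :=
      prod_congr rfl fun t ht ↦ by rw [update_of_ne (ne_of_mem_of_not_mem ht ha)]
    calc 𝔼 χ, (𝔼 z, g χ z) ^ n * ∏ t ∈ insert a T, g χ (χ t)
        = 𝔼 χ, 𝔼 z, (𝔼 y, g χ y) ^ n * (g χ z * ∏ t ∈ T, g χ (χ t)) := by
          rw [expect_eq_expect_expect_update a]
          simp_rw [g_update, prod_insert ha, update_self, prod_update]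
      _ = 𝔼 χ, (𝔼 z, g χ z) ^ (n + 1) * ∏ t ∈ T, g χ (χ t) := by
          simp_rw [← mul_expect, ← expect_mul, pow_succ, mul_assoc]
      _ = 𝔼 χ, (𝔼 z, g χ z) ^ (n + #(insert a T)) := by
          rw [ih (hg.mono (by simp)), card_insert_of_notMem ha, add_right_comm, add_assoc n]

variable [DecidableEq Z]

lemma expect_ite_forall_notMem {T : Finset V} {A : (V → Z) → Finset Z}
    (hA : DependsOn A (T : Set V)ᶜ) :
    (𝔼 χ, if ∀ t ∈ T, χ t ∉ A χ then (1 : ℝ) else 0)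
      = 𝔼 χ, (1 - #(A χ) / Fintype.card Z : ℝ) ^ #T := by
  have indicator_dependsOn :
      DependsOn (fun χ z ↦ if z ∉ A χ then (1 : ℝ) else 0) (T : Set V)ᶜ :=
    fun _ _ h ↦ by simp only [hA h]
  calc (𝔼 χ, if ∀ t ∈ T, χ t ∉ A χ then (1 : ℝ) else 0)
      = 𝔼 χ, ∏ t ∈ T, if χ t ∉ A χ then (1 : ℝ) else 0 :=
        expect_congr rfl fun χ _ ↦ by rw [prod_boole]; congr
    _ = 𝔼 χ, (𝔼 z, if z ∉ A χ then (1 : ℝ) else 0) ^ #T :=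
        expect_prod_apply_eq_expect_pow indicator_dependsOn
    _ = 𝔼 χ, (1 - #(A χ) / Fintype.card Z : ℝ) ^ #T := by simp_rw [expect_ite_notMem]

lemma expect_pow_card_image_le {x : ℝ} (hx₀ : 0 ≤ x) (hx₁ : x ≤ 1) {S : Finset V}
    (hS : 2 * #S ≤ Fintype.card Z) :
    𝔼 χ : V → Z, x ^ #(S.image χ) ≤ ((1 + x) / 2) ^ #S := by
  induction S using Finset.induction_on with
  | empty => simp
  | insert a S ha ih =>
    rw [card_insert_of_notMem ha] at hS
    have image_update (χ : V → Z) (z : Z) : S.image (update χ a z) = S.image χ :=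
      apply_update_of_dependsOn (dependsOn_finset_image S) ha χ z
    have two_mul_card_image_le (χ : V → Z) : 2 * #(S.image χ) ≤ Fintype.card Z := by
      have : #(S.image χ) ≤ #S := card_image_le
      omega
    calc 𝔼 χ : V → Z, x ^ #((insert a S).image χ)
        = 𝔼 χ : V → Z, 𝔼 z, x ^ #(insert z (S.image χ)) := by
          rw [expect_eq_expect_expect_update a]
          simp_rw [image_insert, update_self, image_update]
      _ ≤ 𝔼 χ : V → Z, x ^ #(S.image χ) * ((1 + x) / 2) :=
          expect_le_expect fun χ _ ↦ expect_pow_card_insert_le hx₀ hx₁ (two_mul_card_image_le χ)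
      _ ≤ ((1 + x) / 2) ^ #S * ((1 + x) / 2) := by
          rw [← expect_mul]
          gcongr
          exact ih (by omega)
      _ = ((1 + x) / 2) ^ #(insert a S) := by rw [card_insert_of_notMem ha, pow_succ]

lemma expect_ite_forall_ne_perm_le_of_two_mul_card_le (e : Equiv.Perm Z) {S T : Finset V}
    (hST : Disjoint S T) (hS : 2 * #S ≤ Fintype.card Z) (hT : #T ≤ Fintype.card Z) :
    (𝔼 χ : V → Z, if ∀ s ∈ S, ∀ t ∈ T, χ t ≠ e (χ s) then (1 : ℝ) else 0)
      ≤ Real.exp (-(#S * #T / (4 * Fintype.card Z))) := by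
  set u : ℝ := #T / Fintype.card Z with hu
  have u_nonneg : 0 ≤ u := by positivity
  have u_le_one : u ≤ 1 := div_le_one_of_le₀ (mod_cast hT) (by positivity)
  let forbidden (χ : V → Z) : Finset Z := (S.image χ).map e.toEmbedding
  have forbidden_dependsOn : DependsOn forbidden (T : Set V)ᶜ := fun χ ψ h ↦
    congrArg (·.map e.toEmbedding) <| dependsOn_finset_image S fun s hs ↦
      h s (Finset.disjoint_left.1 hST hs)
  have avoid_iff (χ : V → Z) :
      (∀ s ∈ S, ∀ t ∈ T, χ t ≠ e (χ s)) ↔ ∀ t ∈ T, χ t ∉ forbidden χ := by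
    simp only [forbidden, mem_map_equiv, mem_image, ne_eq, Equiv.eq_symm_apply, not_exists, not_and]
    grind
  calc (𝔼 χ : V → Z, if ∀ s ∈ S, ∀ t ∈ T, χ t ≠ e (χ s) then (1 : ℝ) else 0)
      = 𝔼 χ : V → Z, (1 - #(S.image χ) / Fintype.card Z : ℝ) ^ #T := by
        simp_rw [avoid_iff, expect_ite_forall_notMem forbidden_dependsOn, forbidden, card_map]
    _ ≤ 𝔼 χ : V → Z, Real.exp (-u) ^ #(S.image χ) :=
        expect_le_expect fun χ _ ↦ one_sub_div_pow_le_exp_pow _ (card_le_univ _)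
    _ ≤ ((1 + Real.exp (-u)) / 2) ^ #S :=
        expect_pow_card_image_le (Real.exp_nonneg _) (Real.exp_le_one_iff.2 (by linarith)) hS
    _ ≤ Real.exp (-(u / 4)) ^ #S := by
        gcongr
        exact one_add_exp_neg_div_two_le_exp u_nonneg u_le_one
    _ = Real.exp (-(#S * #T / (4 * Fintype.card Z))) := by
        rw [← Real.exp_nat_mul, hu]
        ring_nf

lemma expect_ite_forall_ne_perm_le (e : Equiv.Perm Z) {S T : Finset V} (hST : Disjoint S T)
    (hcard : #S + #T ≤ Fintype.card Z) :
    (𝔼 χ : V → Z, if ∀ s ∈ S, ∀ t ∈ T, χ t ≠ e (χ s) then (1 : ℝ) else 0)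
      ≤ Real.exp (-(#S * #T / (4 * Fintype.card Z))) := by
  rcases le_total #S #T with hle | hle
  · exact expect_ite_forall_ne_perm_le_of_two_mul_card_le e hST (by omega) (by omega)
  · have swap_iff (χ : V → Z) :
        (∀ s ∈ S, ∀ t ∈ T, χ t ≠ e (χ s)) ↔ ∀ t ∈ T, ∀ s ∈ S, χ s ≠ e.symm (χ t) := by
      simp only [ne_eq, Equiv.eq_symm_apply, eq_comm (a := e _)]
      exact forall₂_comm
    simp_rw [swap_iff, mul_comm (#S : ℝ)]
    exact expect_ite_forall_ne_perm_le_of_two_mul_card_le e.symm hST.symm (by omega) (by omega)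

end RandomColoring

theorem prob_sets_not_connected_general {ε : ℝ} (hε : 0 ≤ ε) {V Z : Type*} [Fintype V]
    [Fintype Z] [Nonempty Z] (e : Equiv.Perm Z) {S T : Finset V} (hST : Disjoint S T)
    (hcard : #S + #T ≤ Fintype.card Z) (hZ : Fintype.card Z ≤ 2 * Fintype.card V)
    (hS : ε * Fintype.card V / 4 ≤ #S) (hT : ε * Fintype.card V / 4 ≤ #T) :
    ({χ : V → Z | ∀ s ∈ S, ∀ t ∈ T, χ t ≠ e (χ s)}.ncard : ℝ)
      ≤ Real.exp (-(ε ^ 2 * Fintype.card V / 128)) * (Fintype.card Z : ℝ) ^ Fintype.card V := by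
  classical
  have exponent_le :
      ε ^ 2 * Fintype.card V / 128 ≤ (#S * #T / (4 * Fintype.card Z) : ℝ) := by
    have hZ' : (Fintype.card Z : ℝ) ≤ 2 * Fintype.card V := mod_cast hZ
    rw [le_div_iff₀ (by positivity)]
    calc ε ^ 2 * Fintype.card V / 128 * (4 * Fintype.card Z)
        ≤ ε ^ 2 * Fintype.card V / 128 * (4 * (2 * Fintype.card V)) := by gcongr
      _ = (ε * Fintype.card V / 4) * (ε * Fintype.card V / 4) := by ring
      _ ≤ #S * #T := by gcongr
  rw [natCast_ncard_setOf_eq_card_mul_expect, Fintype.card_fun, Nat.cast_pow, mul_comm]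
  gcongr
  exact (expect_ite_forall_ne_perm_le e hST hcard).trans (by gcongr)

/-- Let `ε ∈ (0,1)`, `V` a finite set of `ν ≥ 640/ε²`
objects, and `ξ` an integer with `ν ≤ ξ ≤ 2ν`.  Let `S, T ⊆ V` be disjoint
sets each of size at least `εν/4`.  If `χ : V → ℤ/ξℤ` is a uniformly random
coloring, then the probability that there is no pair `s ∈ S`, `t ∈ T` with
`χ(s) − χ(t) ≡ ±1 (mod ξ)` is at most `exp(−ε²ν/640)`.  (Probability is
modelled by counting colorings.) -/
theorem prob_sets_not_connected
    (ε : ℝ) (hε : 0 < ε) (hε1 : ε < 1)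
    (V : Type*) [Fintype V] (ξ : ℕ)
    (hν : (640 : ℝ) / ε ^ 2 ≤ (Fintype.card V : ℝ))
    (hξl : Fintype.card V ≤ ξ) (hξu : ξ ≤ 2 * Fintype.card V)
    (S T : Finset V) (hST : Disjoint S T)
    (hS : ε * (Fintype.card V : ℝ) / 4 ≤ (S.card : ℝ))
    (hT : ε * (Fintype.card V : ℝ) / 4 ≤ (T.card : ℝ)) :
    (({χ : V → ZMod ξ |
        ∀ s ∈ S, ∀ t ∈ T, χ s - χ t ≠ 1 ∧ χ t - χ s ≠ 1}).ncard : ℝ)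
      ≤ Real.exp (-(ε ^ 2 * (Fintype.card V : ℝ) / 640)) *
          (ξ : ℝ) ^ (Fintype.card V) := by
  have : NeZero ξ := ⟨by
    have : (0 : ℝ) < Fintype.card V := lt_of_lt_of_le (by positivity) hν
    have : 0 < Fintype.card V := mod_cast this
    omega⟩
  have card_add_card_le : #S + #T ≤ ξ := (card_disjUnion S T hST ▸ card_le_univ _).trans hξl
  calc ({χ : V → ZMod ξ | ∀ s ∈ S, ∀ t ∈ T, χ s - χ t ≠ 1 ∧ χ t - χ s ≠ 1}.ncard : ℝ)
      ≤ {χ : V → ZMod ξ | ∀ s ∈ S, ∀ t ∈ T, χ t ≠ Equiv.addRight 1 (χ s)}.ncard :=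
        Nat.cast_le.2 <| Set.ncard_le_ncard fun χ hχ s hs t ht h ↦
          (hχ s hs t ht).2 (sub_eq_iff_eq_add'.2 h)
    _ ≤ Real.exp (-(ε ^ 2 * Fintype.card V / 128)) * ξ ^ Fintype.card V := by
        simpa only [ZMod.card] using prob_sets_not_connected_general hε.le
          (Equiv.addRight (1 : ZMod ξ)) hST (by rwa [ZMod.card]) (by rwa [ZMod.card]) hS hT
    _ ≤ Real.exp (-(ε ^ 2 * Fintype.card V / 640)) * ξ ^ Fintype.card V := by
        gcongr
        norm_num
end

section
/- There is a universal constant C > 0 such that for every finite set D of n distinct disks in the plane and every integer k ≥ 1, the number of unordered pairs {d₁, d₂} of distinct disks of D for which there exists a point p ∈ d₁ ∩ d₂ with depth_D(p) ≤ k (that is, the number of k-shallow edges of the intersection graph) is at most C·n·k. -/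
open Metric Set
open scoped Classical

noncomputable section

abbrev Plane : Type := EuclideanSpace ℝ (Fin 2)

/-- A disk is a closed ball of positive radius in the plane. -/
def IsDisk (d : Set Plane) : Prop :=
  ∃ (c : Plane) (r : ℝ), 0 < r ∧ d = Metric.closedBall c r

/-- The depth of a point `p` in a finite family `D` of disks:
the number of disks of `D` containing `p`. -/
def diskDepth (D : Finset (Set Plane)) (p : Plane) : ℕ :=
  {d : Set Plane | d ∈ D ∧ p ∈ d}.ncard

/-- General position: no two boundary circles are tangent (meet in exactly one
point), and no three boundary circles pass through a common point.  (All disks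
are automatically distinct, since `D` is a finite set of point sets.) -/
def GeneralPosition (D : Finset (Set Plane)) : Prop :=
  (∀ d₁ ∈ D, ∀ d₂ ∈ D, d₁ ≠ d₂ → ¬ ∃ p : Plane, frontier d₁ ∩ frontier d₂ = {p}) ∧
  (∀ d₁ ∈ D, ∀ d₂ ∈ D, ∀ d₃ ∈ D, d₁ ≠ d₂ → d₁ ≠ d₃ → d₂ ≠ d₃ →
      frontier d₁ ∩ frontier d₂ ∩ frontier d₃ = ∅)

/-- The intersection graph of a finite family of disks: two distinct disks are
adjacent iff they intersect. -/
def IG (D : Finset (Set Plane)) : SimpleGraph {d // d ∈ D} :=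
  SimpleGraph.fromRel (fun d₁ d₂ => (d₁.1 ∩ d₂.1).Nonempty)

/-- The ε-safe zone for disks `D` and attack set `B`: the set of points `p`
with `depth_{D∖B}(p) ≥ ε·depth_D(p)`. -/
def SafeZone (ε : ℝ) (D B : Finset (Set Plane)) : Set Plane :=
  {p | ε * (diskDepth D p : ℝ) ≤
        (({d : Set Plane | d ∈ D ∧ d ∉ B ∧ p ∈ d}).ncard : ℝ)}

/-- Two points are ε-safely connected if they lie in the same topological
connected component of the ε-safe zone. -/
def SafelyConnected (ε : ℝ) (D B : Finset (Set Plane)) (p q : Plane) : Prop :=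
  q ∈ connectedComponentIn (SafeZone ε D B) p

/-!
A point lying in two disks of a sample and in no other exhibits the pair as an edge of the weighted
Delaunay graph of the centers: the power of the point with respect to a disk is linear in the
center up to a weight of the disk. Two such edges without a common endpoint cannot cross, and being
an edge is an open condition on the centers, so after a small perturbation to general position the
edges form a straight-line plane graph, which has at most `3 * n` edges. For this bound, charge each
edge that is not topmost at its left endpoint to the leftmost vertex of the wedge up to the next
edge; that vertex has the edge directly below it or the next edge directly above it.

The Clarkson–Shor method carries the bound over to depth `k`: in a random sample with density
`1 / (2 * k)`, a `k`-shallow pair is isolated by its shallow point with probability at least a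
constant times `1 / k ^ 2`, while the expected size of the sample is `n / (2 * k)`.
-/

open Filter Topology
open scoped Finset

section Lines

/-- The slope of the line through `u` and `v`, with junk value `0` if that line is vertical. -/
def lineSlope (u v : Plane) : ℝ :=
  (v 1 - u 1) / (v 0 - u 0)

/-- The second coordinate, over the abscissa `x`, of the line through `u` and `v`; a junk value
if that line is vertical. -/
def lineHeight (u v : Plane) (x : ℝ) : ℝ :=
  u 1 + lineSlope u v * (x - u 0)

variable {u v w : Plane} {x y : ℝ}

lemma lineHeight_left (u v : Plane) : lineHeight u v (u 0) = u 1 := by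
  simp [lineHeight]

lemma lineHeight_right (h : u 0 < v 0) : lineHeight u v (v 0) = v 1 := by
  rw [lineHeight, lineSlope, div_mul_cancel₀ _ (sub_ne_zero.2 h.ne'), add_sub_cancel]

lemma continuous_lineHeight (u v : Plane) : Continuous (lineHeight u v) := by
  unfold lineHeight
  fun_prop

lemma lineHeight_lt_lineHeight_iff (hx : u 0 < x) :
    lineHeight u v x < lineHeight u w x ↔ lineSlope u v < lineSlope u w := by
  rw [lineHeight, lineHeight, add_lt_add_iff_left, mul_lt_mul_iff_left₀ (sub_pos.2 hx)]

lemma mk_lineHeight_mem_segment (huv : u 0 < v 0) (hux : u 0 ≤ x) (hxv : x ≤ v 0) :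
    !₂[x, lineHeight u v x] ∈ segment ℝ u v := by
  have hpos : 0 < v 0 - u 0 := sub_pos.2 huv
  rw [segment_eq_image']
  refine ⟨(x - u 0) / (v 0 - u 0), ⟨div_nonneg (sub_nonneg.2 hux) hpos.le,
    (div_le_one hpos).2 (sub_le_sub_right hxv _)⟩, ?_⟩
  ext m
  fin_cases m
  · simp [div_mul_cancel₀ _ hpos.ne']
  · simp [lineHeight, lineSlope, div_mul_eq_mul_div, mul_comm (x - u 0)]

lemma exists_lineHeight_eq {u' v' : Plane} (hxy : x ≤ y)
    (hx : lineHeight u' v' x ≤ lineHeight u v x) (hy : lineHeight u v y < lineHeight u' v' y) :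
    ∃ m, x ≤ m ∧ m < y ∧ lineHeight u v m = lineHeight u' v' m := by
  obtain ⟨m, hm, heq⟩ := isPreconnected_Icc.intermediate_value₂ (right_mem_Icc.2 hxy)
    (left_mem_Icc.2 hxy) (continuous_lineHeight u v).continuousOn
    (continuous_lineHeight u' v').continuousOn hy.le hx
  refine ⟨m, hm.1, hm.2.lt_of_ne ?_, heq⟩
  rintro rfl
  exact hy.ne heq

end Lines

/-- A straight-line plane graph with vertex set `S`, no two vertices on a vertical line. An edge is
stored as the pair of its endpoints, the left one first; distinct edges meet only in common
endpoints. -/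
structure IsPlaneDrawing (S : Finset Plane) (E : Finset (Plane × Plane)) : Prop where
  injOn : InjOn (fun z : Plane => z 0) S
  left_mem : ∀ e ∈ E, e.1 ∈ S
  right_mem : ∀ e ∈ E, e.2 ∈ S
  left_lt_right : ∀ e ∈ E, e.1 0 < e.2 0
  segment_inter_subset : ∀ e ∈ E, ∀ f ∈ E, e ≠ f →
    segment ℝ e.1 e.2 ∩ segment ℝ f.1 f.2 ⊆ {e.1, e.2} ∩ {f.1, f.2}

/-- `f` follows `e` in the counterclockwise order of the edges of `E` that start at the left
endpoint of `e`. -/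
structure IsNextEdge (E : Finset (Plane × Plane)) (e f : Plane × Plane) : Prop where
  mem : f ∈ E
  left_eq : f.1 = e.1
  slope_lt : lineSlope e.1 e.2 < lineSlope f.1 f.2
  slope_le : ∀ g ∈ E, g.1 = e.1 → lineSlope e.1 e.2 < lineSlope g.1 g.2 →
    lineSlope f.1 f.2 ≤ lineSlope g.1 g.2

/-- `e` is the edge of `E` first hit by the downward vertical ray from `z`. -/
structure IsEdgeBelow (E : Finset (Plane × Plane)) (z : Plane) (e : Plane × Plane) : Prop where
  left_lt : e.1 0 < z 0
  lt_right : z 0 < e.2 0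
  height_lt : lineHeight e.1 e.2 (z 0) < z 1
  height_le : ∀ f ∈ E, f.1 0 < z 0 → z 0 < f.2 0 → lineHeight f.1 f.2 (z 0) < z 1 →
    lineHeight f.1 f.2 (z 0) ≤ lineHeight e.1 e.2 (z 0)

/-- `e` is the edge of `E` first hit by the upward vertical ray from `z`. -/
structure IsEdgeAbove (E : Finset (Plane × Plane)) (z : Plane) (e : Plane × Plane) : Prop where
  left_lt : e.1 0 < z 0
  lt_right : z 0 < e.2 0
  lt_height : z 1 < lineHeight e.1 e.2 (z 0)
  le_height : ∀ f ∈ E, f.1 0 < z 0 → z 0 < f.2 0 → z 1 < lineHeight f.1 f.2 (z 0) →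
    lineHeight e.1 e.2 (z 0) ≤ lineHeight f.1 f.2 (z 0)

section Edges

variable {E : Finset (Plane × Plane)} {e f : Plane × Plane}

lemma exists_isNextEdge (hf : f ∈ E) (hleft : f.1 = e.1)
    (hslope : lineSlope e.1 e.2 < lineSlope f.1 f.2) : ∃ g, IsNextEdge E e g := by
  obtain ⟨g, hg, hmin⟩ := Finset.exists_min_image
    {g ∈ E | g.1 = e.1 ∧ lineSlope e.1 e.2 < lineSlope g.1 g.2} (fun g => lineSlope g.1 g.2)
    ⟨f, Finset.mem_filter.2 ⟨hf, hleft, hslope⟩⟩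
  obtain ⟨hgE, hgleft, hgslope⟩ := Finset.mem_filter.1 hg
  exact ⟨g, hgE, hgleft, hgslope, fun g' hg' hleft' hslope' =>
    hmin g' (Finset.mem_filter.2 ⟨hg', hleft', hslope'⟩)⟩

/-- The vertices in the wedge between the edges `e` and `f` with a common left endpoint, up to the
abscissa where the shorter of them ends. -/
def edgeWedge (S : Finset Plane) (e f : Plane × Plane) : Finset Plane :=
  {z ∈ S | e.1 0 < z 0 ∧ z 0 ≤ e.2 0 ∧ z 0 ≤ f.2 0 ∧
    lineHeight e.1 e.2 (z 0) ≤ z 1 ∧ z 1 ≤ lineHeight f.1 f.2 (z 0)}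

end Edges

namespace IsPlaneDrawing

variable {S : Finset Plane} {E : Finset (Plane × Plane)} {e f g : Plane × Plane} {x y : ℝ}

lemma eq_endpoint_of_lineHeight_eq (H : IsPlaneDrawing S E) (he : e ∈ E) (hf : f ∈ E) (hef : e ≠ f)
    (hex : e.1 0 ≤ x) (hxe : x ≤ e.2 0) (hfx : f.1 0 ≤ x) (hxf : x ≤ f.2 0)
    (h : lineHeight e.1 e.2 x = lineHeight f.1 f.2 x) :
    !₂[x, lineHeight e.1 e.2 x] ∈ ({e.1, e.2} ∩ {f.1, f.2} : Set Plane) :=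
  H.segment_inter_subset e he f hf hef
    ⟨mk_lineHeight_mem_segment (H.left_lt_right e he) hex hxe,
      h ▸ mk_lineHeight_mem_segment (H.left_lt_right f hf) hfx hxf⟩

lemma eq_of_lineHeight_eq (H : IsPlaneDrawing S E) (he : e ∈ E) (hf : f ∈ E)
    (hex : e.1 0 < x) (hxe : x < e.2 0) (hfx : f.1 0 < x) (hxf : x < f.2 0)
    (h : lineHeight e.1 e.2 x = lineHeight f.1 f.2 x) : e = f := by
  by_contra hef
  rcases (H.eq_endpoint_of_lineHeight_eq he hf hef hex.le hxe.le hfx.le hxf.le h).1 with hl | hr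
  · exact hex.ne' (congrArg (· 0) hl)
  · exact hxe.ne (congrArg (· 0) hr)

lemma eq_of_lineSlope_eq (H : IsPlaneDrawing S E) (he : e ∈ E) (hf : f ∈ E) (hleft : e.1 = f.1)
    (hslope : lineSlope e.1 e.2 = lineSlope f.1 f.2) : e = f := by
  obtain ⟨x, hex, hx⟩ := exists_between
    (lt_min (H.left_lt_right e he) (hleft ▸ H.left_lt_right f hf))
  obtain ⟨hxe, hxf⟩ := lt_min_iff.1 hx
  refine H.eq_of_lineHeight_eq he hf hex hxe (hleft ▸ hex) hxf ?_
  rw [lineHeight, lineHeight, hslope, hleft]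

lemma lineHeight_lt_of_lineHeight_lt (H : IsPlaneDrawing S E) (he : e ∈ E) (hf : f ∈ E)
    (hef : e.1 ≠ f.1) (hex : e.1 0 ≤ x) (hfx : f.1 0 ≤ x) (hxy : x ≤ y) (hye : y ≤ e.2 0)
    (hyf : y ≤ f.2 0) (h : lineHeight e.1 e.2 y < lineHeight f.1 f.2 y) :
    lineHeight e.1 e.2 x < lineHeight f.1 f.2 x := by
  by_contra! hx
  obtain ⟨m, hxm, hmy, hm⟩ := exists_lineHeight_eq hxy hx h
  obtain ⟨hme | hme, hmf | hmf⟩ := H.eq_endpoint_of_lineHeight_eq he hf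
    (fun h => hef (congrArg Prod.fst h)) (hex.trans hxm) (hmy.le.trans hye) (hfx.trans hxm)
    (hmy.le.trans hyf) hm
  · exact hef (hme.symm.trans hmf)
  · exact (hmy.trans_le hyf).ne (congrArg (· 0) hmf)
  all_goals exact (hmy.trans_le hye).ne (congrArg (· 0) hme)

lemma edgeWedge_nonempty (H : IsPlaneDrawing S E) (he : e ∈ E) (hnext : IsNextEdge E e f) :
    (edgeWedge S e f).Nonempty := by
  have hexe := H.left_lt_right e he
  have hfxf := H.left_lt_right f hnext.mem
  have hlt : ∀ x, e.1 0 < x → lineHeight e.1 e.2 x ≤ lineHeight f.1 f.2 x := fun x hx => by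
    have := hnext.slope_lt
    rw [hnext.left_eq] at this ⊢
    exact ((lineHeight_lt_lineHeight_iff hx).2 this).le
  rcases le_total (e.2 0) (f.2 0) with h | h
  · exact ⟨e.2, Finset.mem_filter.2 ⟨H.right_mem e he, hexe, le_rfl, h,
      (lineHeight_right hexe).le, (lineHeight_right hexe).ge.trans (hlt _ hexe)⟩⟩
  · have hef : e.1 0 < f.2 0 := hnext.left_eq ▸ hfxf
    exact ⟨f.2, Finset.mem_filter.2 ⟨H.right_mem f hnext.mem, hef, h, le_rfl,
      (hlt _ hef).trans (lineHeight_right hfxf).le, (lineHeight_right hfxf).ge⟩⟩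

/-- Followed to the left from `z`, an edge inside the wedge would have to end at a vertex of the
wedge further left, or at the apex, against the choice of the next edge. -/
lemma lineHeight_le_of_leftmost (H : IsPlaneDrawing S E) (he : e ∈ E) (hnext : IsNextEdge E e f)
    {z : Plane} (hz : z ∈ edgeWedge S e f) (hmin : ∀ z' ∈ edgeWedge S e f, z 0 ≤ z' 0)
    (hg : g ∈ E) (hgz : g.1 0 < z 0) (hzg : z 0 < g.2 0)
    (hlower : lineHeight e.1 e.2 (z 0) < lineHeight g.1 g.2 (z 0)) :
    lineHeight f.1 f.2 (z 0) ≤ lineHeight g.1 g.2 (z 0) := by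
  by_contra! hupper
  obtain ⟨-, hez, hze, hzf, -, -⟩ := Finset.mem_filter.1 hz
  have hleft := hnext.left_eq
  by_cases hge : g.1 = e.1
  · rw [← hge] at hlower hez
    rw [hleft, ← hge] at hupper
    have := hnext.slope_le g hg hge
    rw [hleft, ← hge] at this
    exact (this ((lineHeight_lt_lineHeight_iff hez).1 hlower)).not_gt
      ((lineHeight_lt_lineHeight_iff hez).1 hupper)
  have hbetween : ∀ x, e.1 0 ≤ x → g.1 0 ≤ x → x ≤ z 0 →
      lineHeight e.1 e.2 x < lineHeight g.1 g.2 x ∧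
      lineHeight g.1 g.2 x < lineHeight f.1 f.2 x := fun x hex hgx hxz =>
    ⟨H.lineHeight_lt_of_lineHeight_lt he hg (Ne.symm hge) hex hgx hxz hze hzg.le hlower,
      H.lineHeight_lt_of_lineHeight_lt hg hnext.mem (hleft ▸ hge) hgx (hleft ▸ hex) hxz hzg.le hzf
        hupper⟩
  rcases le_or_gt (g.1 0) (e.1 0) with h | h
  · have := hbetween (e.1 0) le_rfl h hez.le
    rw [← hleft, lineHeight_left f.1 f.2, hleft, lineHeight_left] at this
    exact (this.1.trans this.2).false
  · have := hbetween (g.1 0) h.le le_rfl hgz.le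
    rw [lineHeight_left g.1] at this
    exact hgz.not_ge (hmin g.1 (Finset.mem_filter.2 ⟨H.left_mem g hg, h, hgz.le.trans hze,
      hgz.le.trans hzf, this.1.le, this.2.le⟩))

lemma exists_isEdgeBelow_or_isEdgeAbove (H : IsPlaneDrawing S E) (he : e ∈ E)
    (hnext : IsNextEdge E e f) : ∃ z ∈ S, IsEdgeBelow E z e ∨ IsEdgeAbove E z f := by
  obtain ⟨z, hz, hmin⟩ := (edgeWedge S e f).exists_min_image (fun z => z 0)
    (H.edgeWedge_nonempty he hnext)
  have hgap := fun g hg => H.lineHeight_le_of_leftmost (g := g) he hnext hz hmin hg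
  obtain ⟨hzS, hez, hze, hzf, hlower, hupper⟩ := Finset.mem_filter.1 hz
  refine ⟨z, hzS, ?_⟩
  rcases hlower.lt_or_eq with hlt | heq
  · refine Or.inl ⟨hez, hze.lt_of_ne fun h => ?_, hlt, fun g hg hgz hzg hglt => ?_⟩
    · rw [H.injOn hzS (H.right_mem e he) h, lineHeight_right (H.left_lt_right e he)] at hlt
      exact hlt.false
    · by_contra! h
      exact ((hgap g hg hgz hzg h).trans_lt hglt).not_ge hupper
  · have hfz : f.1 0 < z 0 := hnext.left_eq ▸ hez
    have hlt : z 1 < lineHeight f.1 f.2 (z 0) := by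
      have := hnext.slope_lt
      rw [hnext.left_eq] at this ⊢
      exact heq ▸ (lineHeight_lt_lineHeight_iff hez).2 this
    refine Or.inr ⟨hfz, hzf.lt_of_ne fun h => ?_, hlt, fun g hg hgz hzg hglt => ?_⟩
    · rw [H.injOn hzS (H.right_mem f hnext.mem) h,
        lineHeight_right (H.left_lt_right f hnext.mem)] at hlt
      exact hlt.false
    · exact hgap g hg hgz hzg (heq ▸ hglt)

lemma eq_of_isEdgeBelow (H : IsPlaneDrawing S E) {z : Plane} (he : e ∈ E) (hf : f ∈ E)
    (hze : IsEdgeBelow E z e) (hzf : IsEdgeBelow E z f) : e = f :=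
  H.eq_of_lineHeight_eq he hf hze.left_lt hze.lt_right hzf.left_lt hzf.lt_right <|
    (hzf.height_le e he hze.left_lt hze.lt_right hze.height_lt).antisymm
      (hze.height_le f hf hzf.left_lt hzf.lt_right hzf.height_lt)

lemma eq_of_isEdgeAbove (H : IsPlaneDrawing S E) {z : Plane} (he : e ∈ E) (hf : f ∈ E)
    (hze : IsEdgeAbove E z e) (hzf : IsEdgeAbove E z f) : e = f :=
  H.eq_of_lineHeight_eq he hf hze.left_lt hze.lt_right hzf.left_lt hzf.lt_right <|
    (hze.le_height f hf hzf.left_lt hzf.lt_right hzf.lt_height).antisymm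
      (hzf.le_height e he hze.left_lt hze.lt_right hze.lt_height)

lemma eq_of_isNextEdge (H : IsPlaneDrawing S E) (he : e ∈ E) (hf : f ∈ E)
    (heg : IsNextEdge E e g) (hfg : IsNextEdge E f g) : e = f := by
  have hleft : e.1 = f.1 := heg.left_eq.symm.trans hfg.left_eq
  refine H.eq_of_lineSlope_eq he hf hleft (le_antisymm ?_ ?_) <;> by_contra! h
  · exact (hfg.slope_le e he hleft h).not_gt heg.slope_lt
  · exact (heg.slope_le f hf hleft.symm h).not_gt hfg.slope_lt

lemma card_filter_not_isNextEdge_le (H : IsPlaneDrawing S E) :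
    #{e ∈ E | ¬∃ f, IsNextEdge E e f} ≤ #S := by
  have hle : ∀ e f, f ∈ E → f.1 = e.1 → (¬∃ g, IsNextEdge E e g) →
      lineSlope f.1 f.2 ≤ lineSlope e.1 e.2 := fun e f hf hleft he => by
    by_contra! h
    exact he (exists_isNextEdge hf hleft h)
  refine Finset.card_le_card_of_injOn Prod.fst
    (fun e he => H.left_mem e (Finset.mem_filter.1 he).1) fun e he f hf hleft => ?_
  obtain ⟨he, hetop⟩ := Finset.mem_filter.1 he
  obtain ⟨hf, hftop⟩ := Finset.mem_filter.1 hf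
  exact H.eq_of_lineSlope_eq he hf hleft
    ((hle f e he hleft hftop).antisymm (hle e f hf hleft.symm hetop))

lemma card_filter_isEdgeBelow_le (H : IsPlaneDrawing S E) :
    #{e ∈ E | ∃ z ∈ S, IsEdgeBelow E z e} ≤ #S :=
  Finset.card_le_card_of_forall_subsingleton (fun e z => IsEdgeBelow E z e)
    (fun _ he => (Finset.mem_filter.1 he).2) fun _ _ _ he _ hf =>
      H.eq_of_isEdgeBelow (Finset.mem_filter.1 he.1).1 (Finset.mem_filter.1 hf.1).1 he.2 hf.2

lemma card_filter_isNextEdge_isEdgeAbove_le (H : IsPlaneDrawing S E) :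
    #{e ∈ E | ∃ z ∈ S, ∃ f, IsNextEdge E e f ∧ IsEdgeAbove E z f} ≤ #S := by
  refine Finset.card_le_card_of_forall_subsingleton
    (fun e z => ∃ f, IsNextEdge E e f ∧ IsEdgeAbove E z f)
    (fun _ he => (Finset.mem_filter.1 he).2) ?_
  rintro z - e ⟨he, f, hef, hzf⟩ e' ⟨he', f', hef', hzf'⟩
  obtain rfl : f = f' := H.eq_of_isEdgeAbove hef.mem hef'.mem hzf hzf'
  exact H.eq_of_isNextEdge (Finset.mem_filter.1 he).1 (Finset.mem_filter.1 he').1 hef hef'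

theorem card_edges_le (H : IsPlaneDrawing S E) : #E ≤ 3 * #S := by
  have hcover : E ⊆ ({e ∈ E | ¬∃ f, IsNextEdge E e f} ∪ {e ∈ E | ∃ z ∈ S, IsEdgeBelow E z e}) ∪
      {e ∈ E | ∃ z ∈ S, ∃ f, IsNextEdge E e f ∧ IsEdgeAbove E z f} := fun e he => by
    simp only [Finset.mem_union, Finset.mem_filter, he, true_and]
    by_cases hnext : ∃ f, IsNextEdge E e f
    · obtain ⟨f, hf⟩ := hnext
      obtain ⟨z, hz, hbelow | habove⟩ := H.exists_isEdgeBelow_or_isEdgeAbove he hf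
      exacts [Or.inl (Or.inr ⟨z, hz, hbelow⟩), Or.inr ⟨z, hz, f, hf, habove⟩]
    · exact Or.inl (Or.inl hnext)
  have hcard := (Finset.card_le_card hcover).trans <| (Finset.card_union_le _ _).trans <|
    Nat.add_le_add_right (Finset.card_union_le _ _) _
  linarith [H.card_filter_not_isNextEdge_le, H.card_filter_isEdgeBelow_le,
    H.card_filter_isNextEdge_isEdgeAbove_le]

end IsPlaneDrawing

section Delaunay

variable {ι E : Type*} [AddCommGroup E] [Module ℝ E] [TopologicalSpace E]

/-- A weighted Delaunay pair of the points `c i` with weights `w i`: some linear tilt of the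
weights makes the members of `e` lighter than every other index in `S`. For balls with centers `c i`
and weights `‖c i‖ ^ 2 - r i ^ 2`, tilting by `-2 * ⟪p, ·⟫` compares their powers at `p`. -/
def IsDelaunayPair (c : ι → E) (w : ι → ℝ) (S : Finset ι) (e : Sym2 ι) : Prop :=
  ∃ φ : E →L[ℝ] ℝ, ∀ i ∈ e, ∀ l ∈ S, l ∉ e → w i + φ (c i) < w l + φ (c l)

/-- The edges of the weighted Delaunay graph on the index set `S`. -/
def delaunayEdges (c : ι → E) (w : ι → ℝ) (S : Finset ι) : Finset (Sym2 ι) :=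
  {e ∈ S.sym2 | ¬e.IsDiag ∧ IsDelaunayPair c w S e}

variable {c : ι → E} {w : ι → ℝ} {S : Finset ι} {i j k l : ι}

lemma mk_mem_delaunayEdges_iff : s(i, j) ∈ delaunayEdges c w S ↔
    (i ∈ S ∧ j ∈ S) ∧ i ≠ j ∧ IsDelaunayPair c w S s(i, j) := by
  rw [delaunayEdges, Finset.mem_filter, Finset.mk_mem_sym2_iff, Sym2.mk_isDiag_iff]

lemma convexCombination_lt_convexCombination {𝕜 : Type*} [Field 𝕜] [LinearOrder 𝕜]
    [IsStrictOrderedRing 𝕜] {a b a' b' s t s' t' : 𝕜} (haa' : a < a') (hab' : a < b')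
    (hba' : b < a') (hbb' : b < b') (hs : 0 ≤ s) (ht : 0 ≤ t) (hst : s + t = 1) (hs' : 0 ≤ s')
    (ht' : 0 ≤ t') (hst' : s' + t' = 1) : s * a + t * b < s' * a' + t' * b' := by
  obtain ⟨m, hm, hm'⟩ := exists_between (max_lt (lt_min haa' hab') (lt_min hba' hbb'))
  exact (convex_Iio m (max_lt_iff.1 hm).1 (max_lt_iff.1 hm).2 hs ht hst).trans
    (convex_Ioi m (lt_min_iff.1 hm').1 (lt_min_iff.1 hm').2 hs' ht' hst')

/-- At a common point of the segments, each of the two interpolated weights would be smaller than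
the other, because a tilt changes both by the same amount. -/
lemma disjoint_segment_of_mem_delaunayEdges (hij : s(i, j) ∈ delaunayEdges c w S)
    (hkl : s(k, l) ∈ delaunayEdges c w S) (hik : i ≠ k) (hil : i ≠ l) (hjk : j ≠ k) (hjl : j ≠ l) :
    Disjoint (segment ℝ (c i) (c j)) (segment ℝ (c k) (c l)) := by
  obtain ⟨⟨hiS, hjS⟩, -, φ, hφ⟩ := mk_mem_delaunayEdges_iff.1 hij
  obtain ⟨⟨hkS, hlS⟩, -, ψ, hψ⟩ := mk_mem_delaunayEdges_iff.1 hkl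
  simp only [Sym2.mem_iff, forall_eq_or_imp, forall_eq, not_or] at hφ hψ
  refine Set.disjoint_left.2 ?_
  rintro x ⟨s, t, hs, ht, hst, rfl⟩ ⟨s', t', hs', ht', hst', heq⟩
  have hφlt := convexCombination_lt_convexCombination (hφ.1 k hkS ⟨hik.symm, hjk.symm⟩)
    (hφ.1 l hlS ⟨hil.symm, hjl.symm⟩) (hφ.2 k hkS ⟨hik.symm, hjk.symm⟩)
    (hφ.2 l hlS ⟨hil.symm, hjl.symm⟩) hs ht hst hs' ht' hst'
  have hψlt := convexCombination_lt_convexCombination (hψ.1 i hiS ⟨hik, hil⟩)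
    (hψ.1 j hjS ⟨hjk, hjl⟩) (hψ.2 i hiS ⟨hik, hil⟩) (hψ.2 j hjS ⟨hjk, hjl⟩) hs' ht' hst' hs ht hst
  have hφeq := congrArg φ heq
  have hψeq := congrArg ψ heq
  simp only [map_add, map_smul, smul_eq_mul] at hφeq hψeq
  linarith

lemma eventually_isDelaunayPair {e : Sym2 ι} (h : IsDelaunayPair c w S e) :
    ∀ᶠ c' in 𝓝 c, IsDelaunayPair c' w S e := by
  obtain ⟨φ, hφ⟩ := h
  have hlt : ∀ᶠ c' : ι → E in 𝓝 c, ∀ i ∈ e.toFinset, ∀ l ∈ {l ∈ S | l ∉ e},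
      w i + φ (c' i) < w l + φ (c' l) := by
    refine (Finset.eventually_all _).2 fun i hi => (Finset.eventually_all _).2 fun l hl => ?_
    obtain ⟨hlS, hle⟩ := Finset.mem_filter.1 hl
    exact (isOpen_lt (by fun_prop) (by fun_prop)).mem_nhds (hφ i (Sym2.mem_toFinset.1 hi) l hlS hle)
  filter_upwards [hlt] with c' hc'
  exact ⟨φ, fun i hi l hlS hle =>
    hc' i (Sym2.mem_toFinset.2 hi) l (Finset.mem_filter.2 ⟨hlS, hle⟩)⟩

lemma eventually_delaunayEdges_subset (c : ι → E) (w : ι → ℝ) (S : Finset ι) :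
    ∀ᶠ c' in 𝓝 c, delaunayEdges c w S ⊆ delaunayEdges c' w S := by
  have hpairs : ∀ᶠ c' in 𝓝 c, ∀ e ∈ delaunayEdges c w S, IsDelaunayPair c' w S e :=
    (Finset.eventually_all _).2 fun e he =>
      eventually_isDelaunayPair (Finset.mem_filter.1 he).2.2
  filter_upwards [hpairs] with c' hc' e he
  obtain ⟨heS, hdiag, -⟩ := Finset.mem_filter.1 he
  exact Finset.mem_filter.2 ⟨heS, hdiag, hc' e he⟩

end Delaunay

section GenericPosition

variable {ι : Type*} {S : Finset ι} {c : ι → Plane} {w : ι → ℝ}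

/-- The points `c i`, `i ∈ S`, have distinct first coordinates and no three of them are
collinear. -/
structure IsGeneric (S : Finset ι) (c : ι → Plane) : Prop where
  injOn : InjOn (fun i => c i 0) S
  linearIndependent : ∀ i ∈ S, ∀ j ∈ S, ∀ k ∈ S, i ≠ j → i ≠ k → j ≠ k →
    LinearIndependent ℝ ![c j - c i, c k - c i]

lemma eventually_eval_ne_zero {R : Type*} [CommRing R] [IsDomain R] [TopologicalSpace R] [T1Space R]
    {p : Polynomial R} (hp : p ≠ 0) (a : R) : ∀ᶠ x in 𝓝[≠] a, p.eval x ≠ 0 :=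
  nhdsNE_le_cofinite a (Polynomial.finite_setOfPred_isRoot hp).compl_mem_cofinite

lemma linearIndependent_pair_of_det_ne_zero {u v : Plane} (h : u 0 * v 1 - u 1 * v 0 ≠ 0) :
    LinearIndependent ℝ ![u, v] := by
  refine LinearIndependent.pair_iff.2 fun s t hst => ?_
  have h0 : s * u 0 + t * v 0 = 0 := by simpa using congrArg (· 0) hst
  have h1 : s * u 1 + t * v 1 = 0 := by simpa using congrArg (· 1) hst
  exact ⟨(mul_eq_zero.1 (by linear_combination v 1 * h0 - v 0 * h1 :
      s * (u 0 * v 1 - u 1 * v 0) = 0)).resolve_right h,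
    (mul_eq_zero.1 (by linear_combination u 0 * h1 - u 1 * h0 :
      t * (u 0 * v 1 - u 1 * v 0) = 0)).resolve_right h⟩

/-- The displacement of `c i` by `ε` times the point of the parabola `y = x ^ 2` over `t i`. -/
def parabolaShift (t : ι → ℝ) (c : ι → Plane) (ε : ℝ) (i : ι) : Plane :=
  c i + ε • !₂[t i, t i ^ 2]

lemma eventually_parabolaShift_zero_ne {t : ι → ℝ} {i j : ι} (hij : t i ≠ t j) (c : ι → Plane) :
    ∀ᶠ ε in 𝓝[≠] (0 : ℝ), parabolaShift t c ε i 0 ≠ parabolaShift t c ε j 0 := by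
  have hp : (Cubic.mk 0 0 (t i - t j) (c i 0 - c j 0)).toPoly ≠ 0 :=
    Cubic.ne_zero_of_c_ne_zero (sub_ne_zero.2 hij)
  filter_upwards [eventually_eval_ne_zero hp 0] with ε hε heq
  refine hε ?_
  simp only [parabolaShift, PiLp.add_apply, PiLp.smul_apply, smul_eq_mul,
    Matrix.cons_val_zero] at heq
  simp only [Cubic.toPoly, map_zero, zero_mul, zero_add, Polynomial.eval_add, Polynomial.eval_mul,
    Polynomial.eval_C, Polynomial.eval_X]
  linear_combination heq

/-- The coefficient of `ε ^ 2` in the determinant is a Vandermonde determinant. -/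
lemma eventually_linearIndependent_parabolaShift {t : ι → ℝ} {i j k : ι} (hij : t i ≠ t j)
    (hik : t i ≠ t k) (hjk : t j ≠ t k) (c : ι → Plane) :
    ∀ᶠ ε in 𝓝[≠] (0 : ℝ), LinearIndependent ℝ ![parabolaShift t c ε j - parabolaShift t c ε i,
      parabolaShift t c ε k - parabolaShift t c ε i] := by
  have hp : (Cubic.mk 0 ((t j - t i) * (t k - t i) * (t k - t j))
      ((c j 0 - c i 0) * (t k ^ 2 - t i ^ 2) + (t j - t i) * (c k 1 - c i 1)
        - (c j 1 - c i 1) * (t k - t i) - (t j ^ 2 - t i ^ 2) * (c k 0 - c i 0))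
      ((c j 0 - c i 0) * (c k 1 - c i 1) - (c j 1 - c i 1) * (c k 0 - c i 0))).toPoly ≠ 0 :=
    Cubic.ne_zero_of_b_ne_zero (mul_ne_zero
      (mul_ne_zero (sub_ne_zero.2 hij.symm) (sub_ne_zero.2 hik.symm)) (sub_ne_zero.2 hjk.symm))
  filter_upwards [eventually_eval_ne_zero hp 0] with ε hε
  refine linearIndependent_pair_of_det_ne_zero fun hdet => hε ?_
  simp only [parabolaShift, PiLp.sub_apply, PiLp.add_apply, PiLp.smul_apply, smul_eq_mul,
    Matrix.cons_val_zero, Matrix.cons_val_one] at hdet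
  simp only [Cubic.toPoly, map_zero, zero_mul, zero_add, Polynomial.eval_add, Polynomial.eval_mul,
    Polynomial.eval_C, Polynomial.eval_pow, Polynomial.eval_X]
  linear_combination hdet

lemma eventually_isGeneric_parabolaShift {t : ι → ℝ} (ht : InjOn t S) (c : ι → Plane) :
    ∀ᶠ ε in 𝓝[≠] (0 : ℝ), IsGeneric S (parabolaShift t c ε) := by
  have hne : ∀ᶠ ε in 𝓝[≠] (0 : ℝ), ∀ i ∈ S, ∀ j ∈ S, i ≠ j →
      parabolaShift t c ε i 0 ≠ parabolaShift t c ε j 0 :=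
    (Finset.eventually_all S).2 fun i hi => (Finset.eventually_all S).2 fun j hj =>
      eventually_imp_distrib_left.2 fun hij => eventually_parabolaShift_zero_ne (ht.ne hi hj hij) c
  have hindep : ∀ᶠ ε in 𝓝[≠] (0 : ℝ), ∀ i ∈ S, ∀ j ∈ S, ∀ k ∈ S, i ≠ j → i ≠ k → j ≠ k →
      LinearIndependent ℝ ![parabolaShift t c ε j - parabolaShift t c ε i,
        parabolaShift t c ε k - parabolaShift t c ε i] :=
    (Finset.eventually_all S).2 fun i hi => (Finset.eventually_all S).2 fun j hj =>
      (Finset.eventually_all S).2 fun k hk =>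
        eventually_imp_distrib_left.2 fun hij => eventually_imp_distrib_left.2 fun hik =>
          eventually_imp_distrib_left.2 fun hjk => eventually_linearIndependent_parabolaShift
            (ht.ne hi hj hij) (ht.ne hi hk hik) (ht.ne hj hk hjk) c
  filter_upwards [hne, hindep] with ε hε hε'
  exact ⟨fun i hi j hj h => by_contra fun hij => hε i hi j hj hij h, hε'⟩

theorem dense_setOf_isGeneric (S : Finset ι) : Dense {c : ι → Plane | IsGeneric S c} := by
  intro c
  obtain ⟨t, ht⟩ := Set.countable_iff_exists_injOn.1 S.countable_toSet
  have hcont : Continuous (parabolaShift (fun i => (t i : ℝ)) c) := by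
    unfold parabolaShift
    fun_prop
  have hlim : Tendsto (parabolaShift (fun i => (t i : ℝ)) c) (𝓝[≠] 0) (𝓝 c) := by
    have hzero : parabolaShift (fun i => (t i : ℝ)) c 0 = c := by
      ext i : 1
      rw [parabolaShift, zero_smul, add_zero]
    simpa only [hzero] using (hcont.tendsto 0).mono_left nhdsWithin_le_nhds
  exact mem_closure_of_tendsto hlim
    (eventually_isGeneric_parabolaShift (Nat.cast_injective.comp_injOn ht) c)

/-- The Delaunay edges as pairs of indices, oriented from left to right. -/
def orientedDelaunayEdges (c : ι → Plane) (w : ι → ℝ) (S : Finset ι) : Finset (ι × ι) :=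
  {a ∈ S ×ˢ S | s(a.1, a.2) ∈ delaunayEdges c w S ∧ c a.1 0 < c a.2 0}

namespace IsGeneric

lemma segment_inter_eq (hc : IsGeneric S c) {i j k : ι} (hi : i ∈ S) (hj : j ∈ S) (hk : k ∈ S)
    (hij : i ≠ j) (hik : i ≠ k) (hjk : j ≠ k) :
    segment ℝ (c i) (c j) ∩ segment ℝ (c i) (c k) = {c i} :=
  segment_inter_eq_endpoint_of_linearIndependent_sub ℝ
    (hc.linearIndependent i hi j hj k hk hij hik hjk)

lemma segment_inter_subset (hc : IsGeneric S c) {i j k l : ι}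
    (hij : s(i, j) ∈ delaunayEdges c w S) (hkl : s(k, l) ∈ delaunayEdges c w S)
    (hne : s(i, j) ≠ s(k, l)) :
    segment ℝ (c i) (c j) ∩ segment ℝ (c k) (c l) ⊆ {c i, c j} ∩ {c k, c l} := by
  obtain ⟨⟨hiS, hjS⟩, hij', -⟩ := mk_mem_delaunayEdges_iff.1 hij
  obtain ⟨⟨hkS, hlS⟩, hkl', -⟩ := mk_mem_delaunayEdges_iff.1 hkl
  by_cases hik : i = k
  · subst hik
    rw [hc.segment_inter_eq hiS hjS hlS hij' hkl' fun h => hne (by rw [h])]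
    simp
  by_cases hil : i = l
  · subst hil
    rw [segment_symm ℝ (c k), hc.segment_inter_eq hiS hjS hkS hij' hik
      fun h => hne (by rw [h, Sym2.eq_swap])]
    simp
  by_cases hjk : j = k
  · subst hjk
    rw [segment_symm ℝ (c i), hc.segment_inter_eq hjS hiS hlS hij'.symm hkl' hil]
    simp
  by_cases hjl : j = l
  · subst hjl
    rw [segment_symm ℝ (c i), segment_symm ℝ (c k),
      hc.segment_inter_eq hjS hiS hkS hij'.symm hjk hik]
    simp
  rw [(disjoint_segment_of_mem_delaunayEdges hij hkl hik hil hjk hjl).inter_eq]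
  exact empty_subset _

lemma isPlaneDrawing (hc : IsGeneric S c) (w : ι → ℝ) :
    IsPlaneDrawing (S.image c) ((orientedDelaunayEdges c w S).image (Prod.map c c)) := by
  refine ⟨?_, ?_, ?_, ?_, ?_⟩
  · rw [Finset.coe_image]
    exact hc.injOn.image_of_comp
  all_goals simp only [Finset.forall_mem_image, orientedDelaunayEdges, Finset.mem_filter,
    Finset.mem_product]
  · exact fun a ha => Finset.mem_image_of_mem c ha.1.1
  · exact fun a ha => Finset.mem_image_of_mem c ha.1.2
  · exact fun a ha => ha.2.2
  · rintro ⟨i, j⟩ ⟨-, hij, hlt⟩ ⟨k, l⟩ ⟨-, hkl, hlt'⟩ hne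
    refine hc.segment_inter_subset hij hkl fun h => ?_
    rcases Sym2.eq_iff.1 h with ⟨rfl, rfl⟩ | ⟨rfl, rfl⟩
    exacts [hne rfl, hlt.not_gt hlt']

lemma card_delaunayEdges_le (hc : IsGeneric S c) (w : ι → ℝ) :
    #(delaunayEdges c w S) ≤ 3 * #S := by
  have hinj : InjOn c S := fun i hi j hj h => hc.injOn hi hj (congrArg (· 0) h)
  have hsub : delaunayEdges c w S ⊆ (orientedDelaunayEdges c w S).image fun a => s(a.1, a.2) := by
    rintro ⟨i, j⟩ hij
    obtain ⟨⟨hi, hj⟩, hne, -⟩ := mk_mem_delaunayEdges_iff.1 hij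
    rcases (hc.injOn.ne hi hj hne).lt_or_gt with hlt | hlt
    · exact Finset.mem_image.2 ⟨(i, j), by simp [orientedDelaunayEdges, hi, hj, hlt, hij], rfl⟩
    · exact Finset.mem_image.2 ⟨(j, i),
        by simp [orientedDelaunayEdges, hi, hj, hlt, hij, Sym2.eq_swap], Sym2.eq_swap⟩
  have hmaps : ((orientedDelaunayEdges c w S : Finset (ι × ι)) : Set (ι × ι)) ⊆ (S : Set ι) ×ˢ S :=
    fun a ha => by simpa using (Finset.mem_filter.1 ha).1
  calc #(delaunayEdges c w S)
      ≤ #(orientedDelaunayEdges c w S) := (Finset.card_le_card hsub).trans Finset.card_image_le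
    _ = #((orientedDelaunayEdges c w S).image (Prod.map c c)) :=
        (Finset.card_image_of_injOn ((hinj.prodMap hinj).mono hmaps)).symm
    _ ≤ 3 * #(S.image c) := (hc.isPlaneDrawing w).card_edges_le
    _ ≤ 3 * #S := Nat.mul_le_mul_left 3 Finset.card_image_le

end IsGeneric

theorem card_delaunayEdges_le (c : ι → Plane) (w : ι → ℝ) (S : Finset ι) :
    #(delaunayEdges c w S) ≤ 3 * #S := by
  have hfreq : ∃ᶠ c' in 𝓝 c, IsGeneric S c' :=
    mem_closure_iff_frequently.1 (dense_setOf_isGeneric S c)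
  obtain ⟨c', hc', hsub⟩ := (hfreq.and_eventually (eventually_delaunayEdges_subset c w S)).exists
  exact (Finset.card_le_card hsub).trans (hc'.card_delaunayEdges_le w)

end GenericPosition

section RandomSampling

variable {ι α : Type*} {V : Finset ι} {p : ℝ}

/-- The probability of drawing the sample `S` when every element of `V` is kept independently with
probability `p`. -/
def sampleWeight (p : ℝ) (V S : Finset ι) : ℝ :=
  p ^ #S * (1 - p) ^ #(V \ S)

lemma sampleWeight_nonneg (hp₀ : 0 ≤ p) (hp₁ : p ≤ 1) (V S : Finset ι) :
    0 ≤ sampleWeight p V S :=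
  mul_nonneg (pow_nonneg hp₀ _) (pow_nonneg (sub_nonneg.2 hp₁) _)

lemma sum_sampleWeight {D K : Finset ι} (hD : D ⊆ V) (hK : K ⊆ V) (hDK : Disjoint D K) :
    ∑ S ∈ V.powerset with D ⊆ S ∧ Disjoint K S, sampleWeight p V S = p ^ #D * (1 - p) ^ #K := by
  have hprod := Finset.prod_add (fun i => if i ∉ K then p else 0)
    (fun i => if i ∉ D then 1 - p else 0) V
  have hfactor : ∀ i ∈ V, (if i ∉ K then p else 0) + (if i ∉ D then 1 - p else 0) =
      (if i ∈ D then p else 1) * (if i ∈ K then 1 - p else 1) := fun i _ => by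
    by_cases hiD : i ∈ D
    · simp [hiD, Finset.disjoint_left.1 hDK hiD]
    · by_cases hiK : i ∈ K <;> simp [hiD, hiK]
  rw [Finset.prod_congr rfl hfactor, Finset.prod_mul_distrib, Finset.prod_ite_mem,
    Finset.prod_ite_mem, Finset.inter_eq_right.2 hD, Finset.inter_eq_right.2 hK,
    Finset.prod_const, Finset.prod_const] at hprod
  rw [hprod, Finset.sum_filter]
  refine Finset.sum_congr rfl fun S _ => ?_
  rw [Finset.prod_ite_zero, Finset.prod_ite_zero, Finset.prod_const, Finset.prod_const,
    ite_zero_mul_ite_zero, sampleWeight]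
  refine if_congr ?_ rfl rfl
  rw [and_comm, Finset.disjoint_right]
  refine and_congr_right fun _ => ⟨fun h i hi hiD => (Finset.mem_sdiff.1 hi).2 (h hiD),
    fun h i hiD => by_contra fun hiS => h i (Finset.mem_sdiff.2 ⟨hD hiD, hiS⟩) hiD⟩

lemma sum_sampleWeight_mul_card (p : ℝ) (V : Finset ι) :
    ∑ S ∈ V.powerset, sampleWeight p V S * #S = #V * p := by
  have hcard : ∀ S ∈ V.powerset,
      sampleWeight p V S * #S = ∑ i ∈ V, if i ∈ S then sampleWeight p V S else 0 := fun S hS => by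
    rw [Finset.sum_ite_mem, Finset.inter_eq_right.2 (Finset.mem_powerset.1 hS), Finset.sum_const,
      nsmul_eq_mul, mul_comm]
  have hmem : ∀ i ∈ V, (∑ S ∈ V.powerset, if i ∈ S then sampleWeight p V S else 0) = p :=
    fun i hi => by
      simpa [Finset.sum_filter] using sum_sampleWeight (p := p) (Finset.singleton_subset_iff.2 hi)
        (Finset.empty_subset V) (Finset.disjoint_empty_right {i})
  rw [Finset.sum_congr rfl hcard, Finset.sum_comm, Finset.sum_congr rfl hmem, Finset.sum_const,
    nsmul_eq_mul]

section ClarksonShor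

variable {G : Finset α} {defining conflict : α → Finset ι} {A : ℝ} {a b k : ℕ}

/-- Both sides bound the expected number of configurations that survive in a random sample. -/
lemma card_mul_le_of_forall_card_survivors_le (hp₀ : 0 ≤ p) (hp₁ : p ≤ 1)
    (hdefining : ∀ e ∈ G, defining e ⊆ V) (hconflict : ∀ e ∈ G, conflict e ⊆ V)
    (hdisj : ∀ e ∈ G, Disjoint (defining e) (conflict e))
    (hcard : ∀ e ∈ G, #(defining e) ≤ a) (hdepth : ∀ e ∈ G, #(conflict e) ≤ k)
    (hA : ∀ S ⊆ V, (#{e ∈ G | defining e ⊆ S ∧ Disjoint (conflict e) S} : ℝ) ≤ A * #S) :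
    #G * (p ^ a * (1 - p) ^ k) ≤ A * (#V * p) := by
  have hsurvive : ∀ e ∈ G, p ^ a * (1 - p) ^ k ≤
      ∑ S ∈ V.powerset with defining e ⊆ S ∧ Disjoint (conflict e) S, sampleWeight p V S :=
    fun e he => by
      rw [sum_sampleWeight (hdefining e he) (hconflict e he) (hdisj e he)]
      exact mul_le_mul (pow_le_pow_of_le_one hp₀ hp₁ (hcard e he))
        (pow_le_pow_of_le_one (by linarith) (by linarith) (hdepth e he))
        (pow_nonneg (by linarith) _) (pow_nonneg hp₀ _)
  calc #G * (p ^ a * (1 - p) ^ k)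
      ≤ ∑ e ∈ G, ∑ S ∈ V.powerset with defining e ⊆ S ∧ Disjoint (conflict e) S,
          sampleWeight p V S := by
        rw [← nsmul_eq_mul]
        exact Finset.card_nsmul_le_sum _ _ _ hsurvive
    _ = ∑ S ∈ V.powerset, sampleWeight p V S *
          #{e ∈ G | defining e ⊆ S ∧ Disjoint (conflict e) S} := by
        simp_rw [Finset.sum_filter]
        rw [Finset.sum_comm]
        exact Finset.sum_congr rfl fun S _ => by
          rw [← Finset.sum_filter, Finset.sum_const, nsmul_eq_mul, mul_comm]
    _ ≤ ∑ S ∈ V.powerset, sampleWeight p V S * (A * #S) :=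
        Finset.sum_le_sum fun S hS => mul_le_mul_of_nonneg_left (hA S (Finset.mem_powerset.1 hS))
          (sampleWeight_nonneg hp₀ hp₁ V S)
    _ = A * (#V * p) := by
        rw [← sum_sampleWeight_mul_card, Finset.mul_sum]
        exact Finset.sum_congr rfl fun S _ => mul_left_comm _ _ _

theorem card_le_of_clarksonShor (hdefining : ∀ e ∈ G, defining e ⊆ V)
    (hconflict : ∀ e ∈ G, conflict e ⊆ V) (hdisj : ∀ e ∈ G, Disjoint (defining e) (conflict e))
    (hcard : ∀ e ∈ G, #(defining e) ≤ b + 1) (hdepth : ∀ e ∈ G, #(conflict e) ≤ k) (hk : 1 ≤ k)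
    (hA : ∀ S ⊆ V, (#{e ∈ G | defining e ⊆ S ∧ Disjoint (conflict e) S} : ℝ) ≤ A * #S) :
    (#G : ℝ) ≤ 2 * A * #V * (2 * k) ^ b := by
  have hk₀ : (1 : ℝ) ≤ k := mod_cast hk
  set p : ℝ := (2 * k : ℝ)⁻¹
  have hp₀ : 0 < p := by positivity
  have hp₁ : p ≤ 1 := inv_le_one_of_one_le₀ (by linarith)
  have hpk : p * (2 * k) = 1 := inv_mul_cancel₀ (by positivity)
  have hhalf : 1 / 2 ≤ (1 - p) ^ k := calc
    1 / 2 = 1 + k * -p := by linear_combination hpk / 2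
    _ ≤ (1 - p) ^ k := one_add_mul_le_pow (by linarith) k
  have hsample := card_mul_le_of_forall_card_survivors_le hp₀.le hp₁ hdefining hconflict hdisj
    hcard hdepth hA
  have hcancel : #G * p ^ b ≤ 2 * A * #V := le_of_mul_le_mul_right (by
    calc #G * p ^ b * p = 2 * (#G * (p ^ (b + 1) * (1 / 2))) := by ring
      _ ≤ 2 * (#G * (p ^ (b + 1) * (1 - p) ^ k)) := by gcongr
      _ ≤ 2 * (A * (#V * p)) := by gcongr 2 * ?_
      _ = 2 * A * #V * p := by ring) hp₀
  calc (#G : ℝ) = #G * p ^ b * (2 * k) ^ b := by rw [mul_assoc, ← mul_pow, hpk, one_pow, mul_one]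
    _ ≤ 2 * A * #V * (2 * k) ^ b := by gcongr

end ClarksonShor

end RandomSampling

section Disks

lemma mem_closedBall_iff_power_le {E : Type*} [NormedAddCommGroup E] [InnerProductSpace ℝ E]
    {c p : E} {r : ℝ} (hr : 0 ≤ r) :
    p ∈ closedBall c r ↔ ‖c‖ ^ 2 - r ^ 2 + ((-2 : ℝ) • innerSL ℝ p) c ≤ -‖p‖ ^ 2 := by
  rw [mem_closedBall, dist_eq_norm, ← sq_le_sq₀ (norm_nonneg _) hr, norm_sub_sq_real,
    smul_apply, innerSL_apply_apply, smul_eq_mul]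
  constructor <;> intro h <;> linarith

lemma isDelaunayPair_of_mem_closedBall {ι E : Type*} [NormedAddCommGroup E]
    [InnerProductSpace ℝ E] {c : ι → E} {r : ι → ℝ} {S : Finset ι} {e : Sym2 ι} {p : E}
    (hr : ∀ i ∈ e, 0 ≤ r i) (hr' : ∀ l ∈ S, 0 ≤ r l) (hmem : ∀ i ∈ e, p ∈ closedBall (c i) (r i))
    (hnotMem : ∀ l ∈ S, l ∉ e → p ∉ closedBall (c l) (r l)) :
    IsDelaunayPair c (fun i => ‖c i‖ ^ 2 - r i ^ 2) S e := by
  refine ⟨(-2 : ℝ) • innerSL ℝ p, fun i hi l hl hle => ?_⟩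
  have hl' := hnotMem l hl hle
  rw [mem_closedBall_iff_power_le (hr' l hl), not_le] at hl'
  exact ((mem_closedBall_iff_power_le (hr i hi)).1 (hmem i hi)).trans_lt hl'

lemma card_le_of_exists_isolating_point {S : Finset (Set Plane)} (hS : ∀ d ∈ S, IsDisk d)
    {T : Finset (Sym2 (Set Plane))} (hTS : T ⊆ S.sym2) (hdiag : ∀ e ∈ T, ¬e.IsDiag)
    (hT : ∀ e ∈ T, ∃ p : Plane, ∀ d ∈ S, p ∈ d ↔ d ∈ e) : #T ≤ 3 * #S := by
  choose! c r hr hball using hS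
  have hsub : T ⊆ delaunayEdges c (fun d => ‖c d‖ ^ 2 - r d ^ 2) S := fun e he => by
    obtain ⟨p, hp⟩ := hT e he
    have heS : ∀ d ∈ e, d ∈ S := Finset.mem_sym2_iff.1 (hTS he)
    refine Finset.mem_filter.2 ⟨hTS he, hdiag e he, isDelaunayPair_of_mem_closedBall (p := p)
      (fun d hd => (hr d (heS d hd)).le) (fun d hd => (hr d hd).le) (fun d hd => ?_)
      fun d hd hde => ?_⟩
    · exact hball d (heS d hd) ▸ (hp d (heS d hd)).2 hd
    · exact hball d hd ▸ mt (hp d hd).1 hde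
  exact (Finset.card_le_card hsub).trans (card_delaunayEdges_le _ _ _)

/-- The `k`-shallow edges: the pairs of distinct disks of `D` with a common point of depth at
most `k`. -/
def shallowEdges (D : Finset (Set Plane)) (k : ℕ) : Finset (Sym2 (Set Plane)) :=
  {e ∈ D.sym2 | ¬e.IsDiag ∧ ∃ p : Plane, (∀ d ∈ e, p ∈ d) ∧ diskDepth D p ≤ k}

lemma coe_shallowEdges (D : Finset (Set Plane)) (k : ℕ) :
    (shallowEdges D k : Set (Sym2 (Set Plane))) =
      {e | ∃ d₁ d₂ : Set Plane, e = s(d₁, d₂) ∧ d₁ ∈ D ∧ d₂ ∈ D ∧ d₁ ≠ d₂ ∧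
        ∃ p : Plane, p ∈ d₁ ∩ d₂ ∧ diskDepth D p ≤ k} := by
  ext e
  induction e with | _ d₁ d₂
  simp only [shallowEdges, Finset.coe_filter, mem_ofPred_eq, Finset.mk_mem_sym2_iff,
    Sym2.mk_isDiag_iff, Sym2.mem_iff, forall_eq_or_imp, forall_eq]
  constructor
  · rintro ⟨⟨h₁, h₂⟩, hne, p, hp, hdepth⟩
    exact ⟨d₁, d₂, rfl, h₁, h₂, hne, p, hp, hdepth⟩
  · rintro ⟨d₁', d₂', heq, h₁, h₂, hne, p, hp, hdepth⟩
    rcases Sym2.eq_iff.1 heq with ⟨rfl, rfl⟩ | ⟨rfl, rfl⟩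
    exacts [⟨⟨h₁, h₂⟩, hne, p, hp, hdepth⟩, ⟨⟨h₂, h₁⟩, hne.symm, p, hp.symm, hdepth⟩]

/-- The defining disks of an edge are its two members, the conflicting ones are the others through
its shallow point. -/
theorem card_shallowEdges_le {D : Finset (Set Plane)} (hD : ∀ d ∈ D, IsDisk d) {k : ℕ}
    (hk : 1 ≤ k) : (#(shallowEdges D k) : ℝ) ≤ 12 * #D * k := by
  have hshallow : ∀ e ∈ shallowEdges D k, e ∈ D.sym2 ∧ ¬e.IsDiag ∧
      ∃ p : Plane, (∀ d ∈ e, p ∈ d) ∧ diskDepth D p ≤ k := fun e he => Finset.mem_filter.1 he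
  choose! heD hdiag p hp hdepth using hshallow
  set conflict : Sym2 (Set Plane) → Finset (Set Plane) := fun e => {d ∈ D | p e ∈ d ∧ d ∉ e}
  have hdisj : ∀ e, Disjoint e.toFinset (conflict e) := fun e =>
    Finset.disjoint_left.2 fun d hd hd' => (Finset.mem_filter.1 hd').2.2 (Sym2.mem_toFinset.1 hd)
  have hconflict : ∀ e ∈ shallowEdges D k, #(conflict e) ≤ k := fun e he => by
    refine le_trans ?_ (hdepth e he)
    rw [diskDepth, ← Set.ncard_coe_finset, Finset.coe_filter]
    exact Set.ncard_le_ncard (fun d hd => ⟨hd.1, hd.2.1⟩) (D.finite_toSet.subset fun d hd => hd.1)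
  have hsample : ∀ S ⊆ D,
      #{e ∈ shallowEdges D k | e.toFinset ⊆ S ∧ Disjoint (conflict e) S} ≤ 3 * #S := fun S hS => by
    refine card_le_of_exists_isolating_point (fun d hd => hD d (hS hd)) (fun e he => ?_)
      (fun e he => hdiag e (Finset.mem_filter.1 he).1) fun e he => ⟨p e, fun d hd => ⟨?_, ?_⟩⟩
    all_goals obtain ⟨heG, heS, hconflictS⟩ := Finset.mem_filter.1 he
    · exact Finset.mem_sym2_iff.2 fun d hd => heS (Sym2.mem_toFinset.2 hd)
    · exact fun hpd => by_contra fun hde =>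
        Finset.disjoint_right.1 hconflictS hd (Finset.mem_filter.2 ⟨hS hd, hpd, hde⟩)
    · exact hp e heG d
  have hbound := card_le_of_clarksonShor (A := 3) (b := 1)
    (fun e he d hd => Finset.mem_sym2_iff.1 (heD e he) d (Sym2.mem_toFinset.1 hd))
    (fun e _ => Finset.filter_subset _ D) (fun e _ => hdisj e)
    (fun e he => (Sym2.card_toFinset_of_not_isDiag e (hdiag e he)).le) hconflict hk
    fun S hS => mod_cast hsample S hS
  linarith

end Disks

/-- There is a universal constant `C > 0` such that for every
finite set `D` of `n` distinct disks in the plane and every integer `k ≥ 1`,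
the number of unordered pairs `{d₁, d₂}` of distinct disks of `D` admitting a
point `p ∈ d₁ ∩ d₂` of depth at most `k` (the `k`-shallow edges of the
intersection graph) is at most `C·n·k`. -/
theorem shallow_edges_count :
    ∃ C : ℝ, 0 < C ∧
      ∀ (D : Finset (Set Plane)), (∀ d ∈ D, IsDisk d) →
      ∀ k : ℕ, 1 ≤ k →
      (({e : Sym2 (Set Plane) | ∃ d₁ d₂ : Set Plane, e = s(d₁, d₂) ∧
          d₁ ∈ D ∧ d₂ ∈ D ∧ d₁ ≠ d₂ ∧
          ∃ p : Plane, p ∈ d₁ ∩ d₂ ∧ diskDepth D p ≤ k}).ncard : ℝ)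
        ≤ C * D.card * k := by
  refine ⟨12, by norm_num, fun D hD k hk => ?_⟩
  rw [← coe_shallowEdges, Set.ncard_coe_finset]
  exact card_shallowEdges_le hD hk
end
end
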